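/- Let Σ = (∅, ∅) be the hybrid signature with no propositional variables and no nominals. Let M be the Kripke structure with states ℕ and accessibility relation R^M = {(0,1), (0,2), (1,2)} ∪ {(i, i+1) : i ≥ 2}, and let N be the Kripke structure with states ℕ and accessibility relation R^N = {(i, i+1) : i ∈ ℕ}. Then: (a) for every hybrid sentence φ of the {↓}-fragment (formulas built from ⊥, world variables, ¬, ∨, ◇, ↓ only), M, 0 ⊩ φ if and only if N, 0 ⊩ φ; but (b) there is no quasi-injective bisimulation B between M and N with (0, 0) ∈ B. -/

import Mathlib

set_option autoImplicit false

/-! ## Hybrid logic: Kripke structures, hybrid formulas, satisfaction -/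

/-- A Kripke structure over a hybrid signature `Σ = (P, Nom)`:
`P` the propositional variables, `Nom` the nominals. -/
structure Kripke (P : Type) (Nom : Type) : Type 1 where
  W : Type
  R : W → W → Prop
  V : P → W → Prop
  nom : Nom → W

/-- Hybrid formulas over `Σ = (P, Nom)`; the world variables are the natural numbers.
`bind x φ` is `↓x φ`, `atv x φ` is `@_x φ`, `atn s φ` is `@_s φ`, `exq x φ` is `∃x φ`. -/
inductive HForm (P : Type) (Nom : Type) : Type
  | bot  : HForm P Nom
  | prop (p : P) : HForm P Nom
  | nom  (s : Nom) : HForm P Nom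
  | wvar (x : ℕ) : HForm P Nom
  | neg  (φ : HForm P Nom) : HForm P Nom
  | or   (φ ψ : HForm P Nom) : HForm P Nom
  | dia  (φ : HForm P Nom) : HForm P Nom
  | bind (x : ℕ) (φ : HForm P Nom) : HForm P Nom
  | atv  (x : ℕ) (φ : HForm P Nom) : HForm P Nom
  | atn  (s : Nom) (φ : HForm P Nom) : HForm P Nom
  | exq  (x : ℕ) (φ : HForm P Nom) : HForm P Nom

namespace HForm

/-- Conjunction, as an abbreviation `φ ∧ ψ := ¬(¬φ ∨ ¬ψ)`. -/
def and {P Nom : Type} (φ ψ : HForm P Nom) : HForm P Nom := .neg (.or (.neg φ) (.neg ψ))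

/-- Free world variables of a hybrid formula. -/
def free {P Nom : Type} : HForm P Nom → Set ℕ
  | .bot => ∅
  | .prop _ => ∅
  | .nom _ => ∅
  | .wvar x => {x}
  | .neg φ => φ.free
  | .or φ ψ => φ.free ∪ ψ.free
  | .dia φ => φ.free
  | .bind x φ => φ.free \ {x}
  | .atv x φ => insert x φ.free
  | .atn _ φ => φ.free
  | .exq x φ => φ.free \ {x}

/-- The degree of a hybrid formula. -/
def deg {P Nom : Type} : HForm P Nom → ℕ
  | .bot => 0
  | .prop _ => 0
  | .nom _ => 0
  | .wvar _ => 0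
  | .neg φ => φ.deg
  | .or φ ψ => max φ.deg ψ.deg
  | .dia φ => φ.deg + 1
  | .bind _ φ => φ.deg + 1
  | .atv _ φ => φ.deg
  | .atn _ φ => φ.deg
  | .exq _ φ => φ.deg + 1

end HForm

/-- The hybrid language features beyond basic modal logic: `@`, `↓`, `∃`, nominals. -/
inductive Feature : Type
  | at_ | bind | exq | nom
deriving DecidableEq

/-- Membership of a hybrid formula in the `F`-fragment: it uses only operators from `F`,
and nominals only if `Feature.nom ∈ F`. -/
def HForm.inFragment {P Nom : Type} (F : Set Feature) : HForm P Nom → Prop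
  | .bot => True
  | .prop _ => True
  | .nom _ => Feature.nom ∈ F
  | .wvar _ => True
  | .neg φ => φ.inFragment F
  | .or φ ψ => φ.inFragment F ∧ ψ.inFragment F
  | .dia φ => φ.inFragment F
  | .bind _ φ => Feature.bind ∈ F ∧ φ.inFragment F
  | .atv _ φ => Feature.at_ ∈ F ∧ φ.inFragment F
  | .atn _ φ => Feature.at_ ∈ F ∧ Feature.nom ∈ F ∧ φ.inFragment F
  | .exq _ φ => Feature.exq ∈ F ∧ φ.inFragment F

/-- Hybrid satisfaction `M, ν, m ⊩ φ`. -/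
def HSat {P Nom : Type} (M : Kripke P Nom) : (ℕ → M.W) → M.W → HForm P Nom → Prop
  | _, _, .bot => False
  | _, m, .prop p => M.V p m
  | _, m, .nom s => m = M.nom s
  | ν, m, .wvar x => m = ν x
  | ν, m, .neg φ => ¬ HSat M ν m φ
  | ν, m, .or φ ψ => HSat M ν m φ ∨ HSat M ν m ψ
  | ν, m, .dia φ => ∃ m', M.R m m' ∧ HSat M ν m' φ
  | ν, m, .bind x φ => HSat M (Function.update ν x m) m φ
  | ν, m, .atv x φ => HSat M ν (ν x) φ
  | ν, m, .atn s φ => HSat M ν (M.nom s) φ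
  | ν, m, .exq x φ => ∃ m' : M.W, HSat M (Function.update ν x m') m φ

/-- Satisfaction of a hybrid sentence: `M, m ⊩ φ` (the assignment is irrelevant). -/
def HSatS {P Nom : Type} (M : Kripke P Nom) (m : M.W) (φ : HForm P Nom) : Prop :=
  ∀ ν : ℕ → M.W, HSat M ν m φ

/-- `F`-elementary equivalence of pointed Kripke structures. -/
def FElemEquiv {P Nom : Type} (F : Set Feature) (M : Kripke P Nom) (m : M.W)
    (N : Kripke P Nom) (n : N.W) : Prop :=
  ∀ ψ : HForm P Nom, ψ.inFragment F → ψ.free = ∅ → (HSatS M m ψ ↔ HSatS N n ψ)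

/-! ## First-order logic over the corresponding signature `Σ°` -/

/-- First-order variables: the world variables `Sum.inl n` together with the two
designated variables `x = Sum.inr false` and `y = Sum.inr true`. -/
abbrev FVar : Type := ℕ ⊕ Bool

/-- First-order terms over `Σ°` with variables from `V`: variables and nominal constants. -/
inductive FOTerm (Nom V : Type) : Type
  | var (v : V)
  | nom (s : Nom)

/-- First-order formulas over `Σ°` (one binary relation `R`, a unary predicate for each
propositional variable, a constant for each nominal), with variables from `V`. -/
inductive FOForm (P Nom V : Type) : Type
  | bot
  | pred (p : P) (t : FOTerm Nom V)
  | rel (t u : FOTerm Nom V)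
  | eq (t u : FOTerm Nom V)
  | neg (φ : FOForm P Nom V)
  | or (φ ψ : FOForm P Nom V)
  | ex (v : V) (φ : FOForm P Nom V)

/-- First-order conjunction, `φ ∧ ψ := ¬(¬φ ∨ ¬ψ)`. -/
def FOForm.and {P Nom V : Type} (φ ψ : FOForm P Nom V) : FOForm P Nom V :=
  .neg (.or (.neg φ) (.neg ψ))

/-- Value of a term under an assignment, in a Kripke structure viewed as a `Σ°`-structure. -/
def FOTerm.val {P Nom V : Type} (M : Kripke P Nom) (g : V → M.W) : FOTerm Nom V → M.W
  | .var v => g v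
  | .nom s => M.nom s

/-- First-order satisfaction in a Kripke structure viewed as a `Σ°`-structure. -/
def FOSat {P Nom V : Type} [DecidableEq V] (M : Kripke P Nom) (g : V → M.W) :
    FOForm P Nom V → Prop
  | .bot => False
  | .pred p t => M.V p (t.val M g)
  | .rel t u => M.R (t.val M g) (u.val M g)
  | .eq t u => t.val M g = u.val M g
  | .neg φ => ¬ FOSat M g φ
  | .or φ ψ => FOSat M g φ ∨ FOSat M g ψ
  | .ex v φ => ∃ w : M.W, FOSat M (Function.update g v w) φ

/-- Variables of a first-order term. -/
def FOTerm.fvars {Nom V : Type} : FOTerm Nom V → Set V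
  | .var v => {v}
  | .nom _ => ∅

/-- Free variables of a first-order formula. -/
def FOForm.free {P Nom V : Type} : FOForm P Nom V → Set V
  | .bot => ∅
  | .pred _ t => t.fvars
  | .rel t u => t.fvars ∪ u.fvars
  | .eq t u => t.fvars ∪ u.fvars
  | .neg φ => φ.free
  | .or φ ψ => φ.free ∪ ψ.free
  | .ex v φ => φ.free \ {v}

/-- The standard translation `stdTr b φ`; `b : Bool` chooses the current designated
variable (`false` for `x`, `true` for `y`). -/
def stdTr {P Nom : Type} : Bool → HForm P Nom → FOForm P Nom FVar
  | b, .bot => .bot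
  | b, .prop p => .pred p (.var (Sum.inr b))
  | b, .nom s => .eq (.nom s) (.var (Sum.inr b))
  | b, .wvar z => .eq (.var (Sum.inl z)) (.var (Sum.inr b))
  | b, .neg φ => .neg (stdTr b φ)
  | b, .or φ ψ => .or (stdTr b φ) (stdTr b ψ)
  | b, .dia φ => .ex (Sum.inr (!b))
      (FOForm.and (.rel (.var (Sum.inr b)) (.var (Sum.inr (!b)))) (stdTr (!b) φ))
  | b, .bind z φ => .ex (Sum.inl z)
      (FOForm.and (.eq (.var (Sum.inl z)) (.var (Sum.inr b))) (stdTr b φ))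
  | b, .atv z φ => .ex (Sum.inr (!b))
      (FOForm.and (.eq (.var (Sum.inr (!b))) (.var (Sum.inl z))) (stdTr (!b) φ))
  | b, .atn s φ => .ex (Sum.inr (!b))
      (FOForm.and (.eq (.var (Sum.inr (!b))) (.nom s)) (stdTr (!b) φ))
  | b, .exq z φ => .ex (Sum.inl z) (stdTr b φ)

/-- `M ⊨ φ[m]`: satisfaction of a first-order formula whose free variable is the
designated variable `x = Sum.inr false`, under the assignment sending `x` to `m`. -/
def FOSatAt {P Nom : Type} (M : Kripke P Nom) (m : M.W) (φ : FOForm P Nom FVar) : Prop :=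
  ∀ g : FVar → M.W, g (Sum.inr false) = m → FOSat M g φ

/-! ## Bisimulations -/

/-- Ordinary bisimulations between Kripke structures. -/
def IsBisim {P Nom : Type} (M N : Kripke P Nom) (B : M.W → N.W → Prop) : Prop :=
  ∀ m n, B m n →
    (∀ p, M.V p m ↔ N.V p n) ∧
    (∀ m', M.R m m' → ∃ n', N.R n n' ∧ B m' n') ∧
    (∀ n', N.R n n' → ∃ m', M.R m m' ∧ B m' n')

/-- Quasi-injectivity of a bisimulation. -/
def QuasiInjective {P Nom : Type} (M N : Kripke P Nom) (B : M.W → N.W → Prop) : Prop :=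
  (∀ m n n', B m n → B m n' → n ≠ n' →
     ¬ Relation.ReflTransGen N.R n n' ∧ ¬ Relation.ReflTransGen N.R n' n) ∧
  (∀ m m' n, B m n → B m' n → m ≠ m' →
     ¬ Relation.ReflTransGen M.R m m' ∧ ¬ Relation.ReflTransGen M.R m' m)

/-- The type of relations `B_k ⊆ (M^k × M) × (N^k × N)`. -/
abbrev KRel {P Nom : Type} (M N : Kripke P Nom) (k : ℕ) : Type :=
  (Fin k → M.W) → M.W → (Fin k → N.W) → N.W → Prop

section BisimConds

variable {P Nom : Type} (M N : Kripke P Nom) {k : ℕ}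

/-- Condition (prop). -/
def PropCond (B : KRel M N k) : Prop :=
  ∀ mb m nb n, B mb m nb n → ∀ p, M.V p m ↔ N.V p n

/-- Condition (wvar). -/
def WvarCond (B : KRel M N k) : Prop :=
  ∀ mb m nb n, B mb m nb n → ∀ j : Fin k, mb j = m ↔ nb j = n

/-- Condition (forth). -/
def ForthCond (B : KRel M N k) : Prop :=
  ∀ mb m nb n, B mb m nb n → ∀ m', M.R m m' → ∃ n', N.R n n' ∧ B mb m' nb n'

/-- Condition (back). -/
def BackCond (B : KRel M N k) : Prop :=
  ∀ mb m nb n, B mb m nb n → ∀ n', N.R n n' → ∃ m', M.R m m' ∧ B mb m' nb n'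

/-- Condition (nom). -/
def NomCond (B : KRel M N k) : Prop :=
  ∀ mb m nb n, B mb m nb n → ∀ s : Nom, m = M.nom s ↔ n = N.nom s

/-- Condition (atv). -/
def AtvCond (B : KRel M N k) : Prop :=
  ∀ mb m nb n, B mb m nb n → ∀ j : Fin k, B mb (mb j) nb (nb j)

/-- Condition (atn). -/
def AtnCond (B : KRel M N k) : Prop :=
  ∀ mb m nb n, B mb m nb n → ∀ s : Nom, B mb (M.nom s) nb (N.nom s)

/-- Condition (bind). -/
def BindCond (B : KRel M N k) : Prop :=
  ∀ mb m nb n, B mb m nb n → ∀ j : Fin k,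
    B (Function.update mb j m) m (Function.update nb j n) n

/-- Condition (ex). -/
def ExCond (B : KRel M N k) : Prop :=
  ∀ mb m nb n, B mb m nb n → ∀ j : Fin k,
    (∀ u : M.W, ∃ u' : N.W, B (Function.update mb j u) m (Function.update nb j u') n) ∧
    (∀ u' : N.W, ∃ u : M.W, B (Function.update mb j u) m (Function.update nb j u') n)

/-- A `k`-bisimulation: conditions (prop), (wvar), (forth), (back). -/
def IsKBisim (B : KRel M N k) : Prop :=
  PropCond M N B ∧ WvarCond M N B ∧ ForthCond M N B ∧ BackCond M N B

/-- The conditions `cond(F)` for a feature set `F`, for a single relation `B_k`. -/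
def SatisfiesConds (F : Set Feature) (B : KRel M N k) : Prop :=
  (Feature.nom ∈ F → NomCond M N B) ∧
  (Feature.bind ∈ F → BindCond M N B) ∧
  (Feature.at_ ∈ F → AtvCond M N B) ∧
  (Feature.exq ∈ F → ExCond M N B) ∧
  (Feature.at_ ∈ F → Feature.nom ∈ F → AtnCond M N B)

end BisimConds

/-- An `F`-ω-bisimulation: a non-empty family `(B_k)` of `k`-bisimulations satisfying
(ext) and all the conditions in `cond(F)`. -/
def IsFOmegaBisim {P Nom : Type} (F : Set Feature) (M N : Kripke P Nom)
    (B : (k : ℕ) → KRel M N k) : Prop :=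
  (∀ k, IsKBisim M N (B k)) ∧
  (∃ k mb m nb n, B k mb m nb n) ∧
  (∀ k (mb : Fin k → M.W) m nb n, B k mb m nb n →
     B (k+1) (Fin.snoc mb m) m (Fin.snoc nb n) n) ∧
  (∀ k, SatisfiesConds M N F (B (k : ℕ)))

/-! ## `(k,ℓ)`- and `(ω,ℓ)`-bisimulations -/

section KL

variable {P Nom : Type} (M N : Kripke P Nom)

/-- A basic `(k,ℓ)`-bisimulation from `M` to `N` (the relations `Z i` for `i ≤ ℓ`). -/
def IsBasicKLBisim (k ℓ : ℕ) (Z : ℕ → KRel M N k) : Prop :=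
  (∀ i ≤ ℓ, PropCond M N (Z i) ∧ WvarCond M N (Z i)) ∧
  (∀ i, 0 < i → i ≤ ℓ → ∀ mb m nb n, Z (i-1) mb m nb n →
    (∀ u, M.R m u → ∃ u', N.R n u' ∧ Z i mb u nb u') ∧
    (∀ u', N.R n u' → ∃ u, M.R m u ∧ Z i mb u nb u'))

/-- The conditions `cond(F)` for a `(k,ℓ)`-bisimulation: (nom), (atv), (atn) are
required within each `Z i` (`i ≤ ℓ`), whereas (bind) and (ex) pass from `Z (i-1)`
to `Z i` for `0 < i ≤ ℓ`. -/
def KLSatisfiesConds (F : Set Feature) (k ℓ : ℕ) (Z : ℕ → KRel M N k) : Prop :=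
  (Feature.nom ∈ F → ∀ i ≤ ℓ, NomCond M N (Z i)) ∧
  (Feature.at_ ∈ F → ∀ i ≤ ℓ, AtvCond M N (Z i)) ∧
  (Feature.at_ ∈ F → Feature.nom ∈ F → ∀ i ≤ ℓ, AtnCond M N (Z i)) ∧
  (Feature.bind ∈ F → ∀ i, 0 < i → i ≤ ℓ → ∀ mb m nb n, Z (i-1) mb m nb n →
     ∀ j : Fin k, Z i (Function.update mb j m) m (Function.update nb j n) n) ∧
  (Feature.exq ∈ F → ∀ i, 0 < i → i ≤ ℓ → ∀ mb m nb n, Z (i-1) mb m nb n →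
     ∀ j : Fin k,
       (∀ u : M.W, ∃ u' : N.W, Z i (Function.update mb j u) m (Function.update nb j u') n) ∧
       (∀ u' : N.W, ∃ u : M.W, Z i (Function.update mb j u) m (Function.update nb j u') n))

/-- An `F`-`(k,ℓ)`-bisimulation. -/
def IsFKLBisim (F : Set Feature) (k ℓ : ℕ) (Z : ℕ → KRel M N k) : Prop :=
  IsBasicKLBisim M N k ℓ Z ∧ KLSatisfiesConds M N F k ℓ Z

/-- An `F`-`(ω,ℓ)`-bisimulation: a system `(Z^k_i)_{i ≤ ℓ, k ∈ ω}` of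
`F`-`(k,ℓ)`-bisimulations satisfying the extensibility condition (ext). -/
def IsFOmegaLBisim (F : Set Feature) (ℓ : ℕ)
    (Z : (k : ℕ) → ℕ → KRel M N k) : Prop :=
  (∀ k, IsFKLBisim M N F k ℓ (Z k)) ∧
  (∀ k i, 0 < i → i ≤ ℓ → ∀ (mb : Fin k → M.W) m nb n, Z k (i-1) mb m nb n →
     Z (k+1) i (Fin.snoc mb m) m (Fin.snoc nb n) n)

end KL
/-- The Kripke structure `M` of Example 1 of the paper: states `ℕ`, accessibility
`{(0,1), (0,2), (1,2)} ∪ {(i, i+1) : i ≥ 2}`. -/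
def strM : Kripke Empty Empty where
  W := ℕ
  R := fun i j => (i = 0 ∧ j = 1) ∨ (i = 0 ∧ j = 2) ∨ (i = 1 ∧ j = 2) ∨ (2 ≤ i ∧ j = i + 1)
  V := fun p _ => p.elim
  nom := fun s => s.elim

/-- The Kripke structure `N` of Example 1 of the paper: the chain on `ℕ`. -/
def strN : Kripke Empty Empty where
  W := ℕ
  R := fun i j => j = i + 1
  V := fun p _ => p.elim
  nom := fun s => s.elim

/-!
Along a path of an acyclic structure, a state named by `↓x` is never met again, so a world variable
holds at the current state only if it was bound since the last step. Hence in acyclic structures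
`↓`-formulas see no more than modal formulas do, and are invariant under ordinary bisimulations. In
`strM` and `strN` every transition increases the state, and for lack of propositional variables the
total relation between these serial structures is a bisimulation. Quasi-injectivity fails because
the successors `1` and `2` of `0` in `strM`, which lie on one path, are both related to the only
successor of `0` in `strN`.
-/

open Relation

section Acyclic

variable {P Nom : Type}

/-- A Kripke structure is acyclic if no nonempty path returns to its starting state. Infinite
descending paths are allowed. -/
def Kripke.IsAcyclic (M : Kripke P Nom) : Prop :=
  ∀ m, ¬ TransGen M.R m m

theorem Kripke.IsAcyclic.of_strictMono {M : Kripke P Nom} {α : Type*} [Preorder α] (rank : M.W → α)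
    (hrank : ∀ m m', M.R m m' → rank m < rank m') : M.IsAcyclic := by
  intro m hm
  have hlt : TransGen (· < ·) (rank m) (rank m) := hm.lift rank hrank
  rw [transGen_eq_self] at hlt
  exact lt_irrefl _ hlt

theorem Kripke.IsAcyclic.ne_of_reflTransGen_of_rel {M : Kripke P Nom} (hM : M.IsAcyclic)
    {u m m' : M.W} (hum : ReflTransGen M.R u m) (hmm' : M.R m m') : m' ≠ u := by
  rintro rfl
  exact hM _ (TransGen.tail' hum hmm')

end Acyclic

section BindInvariance

variable {P Nom : Type} {M N : Kripke P Nom}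

/-- The assignments `ν` and `μ`, restricted to the variables in `S`, have matching histories at `m`
and `n`: every variable names a state from which the current one is reachable, and it names the
current state on the left iff it does so on the right. This is the invariant that relates the
evaluation of a `↓`-formula with free variables in `S` on both sides. -/
def HistoriesMatch (M N : Kripke P Nom) (S : Set ℕ) (ν : ℕ → M.W) (m : M.W) (μ : ℕ → N.W)
    (n : N.W) : Prop :=
  ∀ x ∈ S, ReflTransGen M.R (ν x) m ∧ ReflTransGen N.R (μ x) n ∧ (m = ν x ↔ n = μ x)

namespace HistoriesMatch

variable {S T : Set ℕ} {ν : ℕ → M.W} {m m' : M.W} {μ : ℕ → N.W} {n n' : N.W}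

theorem mono (hST : S ⊆ T) (h : HistoriesMatch M N T ν m μ n) : HistoriesMatch M N S ν m μ n :=
  fun x hx => h x (hST hx)

theorem step (hM : M.IsAcyclic) (hN : N.IsAcyclic) (h : HistoriesMatch M N S ν m μ n)
    (hm : M.R m m') (hn : N.R n n') : HistoriesMatch M N S ν m' μ n' := by
  intro x hx
  obtain ⟨hνm, hμn, -⟩ := h x hx
  exact ⟨hνm.tail hm, hμn.tail hn, iff_of_false (hM.ne_of_reflTransGen_of_rel hνm hm)
    (hN.ne_of_reflTransGen_of_rel hμn hn)⟩

theorem update (y : ℕ) (h : HistoriesMatch M N (S \ {y}) ν m μ n) :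
    HistoriesMatch M N S (Function.update ν y m) m (Function.update μ y n) n := by
  intro x hx
  obtain rfl | hxy := eq_or_ne x y
  · simp only [Function.update_self, ReflTransGen.refl, true_and]
  · simpa only [Function.update_of_ne hxy] using h x ⟨hx, hxy⟩

end HistoriesMatch

theorem IsBisim.hSat_iff_of_historiesMatch {B : M.W → N.W → Prop} (hB : IsBisim M N B)
    (hM : M.IsAcyclic) (hN : N.IsAcyclic) {φ : HForm P Nom} (hφ : φ.inFragment {Feature.bind})
    {ν : ℕ → M.W} {m : M.W} {μ : ℕ → N.W} {n : N.W} (hmn : B m n)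
    (h : HistoriesMatch M N φ.free ν m μ n) : HSat M ν m φ ↔ HSat N μ n φ := by
  induction φ generalizing ν m μ n with
  | bot => exact Iff.rfl
  | prop p => exact (hB m n hmn).1 p
  | nom s => cases hφ
  | wvar x => exact (h x rfl).2.2
  | neg φ ih => exact not_congr (ih hφ hmn h)
  | or φ ψ ihφ ihψ =>
    exact or_congr (ihφ hφ.1 hmn (h.mono Set.subset_union_left))
      (ihψ hφ.2 hmn (h.mono Set.subset_union_right))
  | dia φ ih =>
    obtain ⟨-, hforth, hback⟩ := hB m n hmn
    constructor
    · rintro ⟨m', hm, hsat⟩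
      obtain ⟨n', hn, hmn'⟩ := hforth m' hm
      exact ⟨n', hn, (ih hφ hmn' (h.step hM hN hm hn)).1 hsat⟩
    · rintro ⟨n', hn, hsat⟩
      obtain ⟨m', hm, hmn'⟩ := hback n' hn
      exact ⟨m', hm, (ih hφ hmn' (h.step hM hN hm hn)).2 hsat⟩
  | bind y φ ih => exact ih hφ.2 hmn (h.update y)
  | atv x φ => cases hφ.1
  | atn s φ => cases hφ.1
  | exq x φ => cases hφ.1

theorem IsBisim.fElemEquiv_bind {B : M.W → N.W → Prop} (hB : IsBisim M N B) (hM : M.IsAcyclic)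
    (hN : N.IsAcyclic) {m : M.W} {n : N.W} (hmn : B m n) : FElemEquiv {Feature.bind} M m N n := by
  intro φ hφ hfree
  have hsat_iff (ν : ℕ → M.W) (μ : ℕ → N.W) : HSat M ν m φ ↔ HSat N μ n φ :=
    hB.hSat_iff_of_historiesMatch hM hN hφ hmn (by simp [HistoriesMatch, hfree])
  exact ⟨fun h μ => (hsat_iff (fun _ => m) μ).1 (h _), fun h ν => (hsat_iff ν fun _ => n).2 (h _)⟩

end BindInvariance

section Bisimulations

variable {P Nom : Type} {M N : Kripke P Nom}

theorem isBisim_true_of_leftTotal [IsEmpty P] (hM : Relator.LeftTotal M.R)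
    (hN : Relator.LeftTotal N.R) : IsBisim M N fun _ _ => True :=
  fun m n _ => ⟨isEmptyElim, fun _ _ => (hN n).imp fun _ hn => ⟨hn, trivial⟩,
    fun _ _ => (hM m).imp fun _ hm => ⟨hm, trivial⟩⟩

theorem QuasiInjective.eq_of_rel_of_rel {B : M.W → N.W → Prop} (hQ : QuasiInjective M N B)
    (hB : IsBisim M N B) {m : M.W} {n : N.W} (hmn : B m n) (hn : {n' | N.R n n'}.Subsingleton)
    {a b : M.W} (ha : M.R m a) (hb : M.R m b) (hab : ReflTransGen M.R a b) : a = b := by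
  obtain ⟨-, hforth, -⟩ := hB m n hmn
  obtain ⟨a', hna', haa'⟩ := hforth a ha
  obtain ⟨b', hnb', hbb'⟩ := hforth b hb
  obtain rfl : a' = b' := hn hna' hnb'
  by_contra hne
  exact (hQ.2 a b a' haa' hbb' hne).1 hab

end Bisimulations

section Example

theorem strM_rel_iff {i j : ℕ} :
    strM.R i j ↔ (i = 0 ∧ j = 1) ∨ (i = 0 ∧ j = 2) ∨ (i = 1 ∧ j = 2) ∨ (2 ≤ i ∧ j = i + 1) :=
  Iff.rfl

theorem strM_rel_succ (i : ℕ) : strM.R i (i + 1 : ℕ) := by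
  rw [strM_rel_iff]
  omega

theorem strM_isAcyclic : strM.IsAcyclic := by
  refine .of_strictMono (α := ℕ) id fun (i j : ℕ) hij => show i < j from ?_
  rw [strM_rel_iff] at hij
  omega

theorem strN_isAcyclic : strN.IsAcyclic :=
  .of_strictMono (α := ℕ) id fun _ _ hij => Nat.lt_of_succ_le hij.ge

theorem isBisim_strM_strN_true : IsBisim strM strN fun _ _ => True :=
  isBisim_true_of_leftTotal (fun i => ⟨_, strM_rel_succ i⟩) fun _ => ⟨_, rfl⟩

theorem strN_subsingleton_successors (n : strN.W) : {n' | strN.R n n'}.Subsingleton :=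
  fun _ ha _ hb => ha.trans hb.symm

end Example

/-- Example 1 of the paper. The structures `M` and `N` agree at `0` on
all sentences of the `{↓}`-fragment, but there is no quasi-injective bisimulation between
them relating `0` to `0`. -/
theorem bind_equivalent_but_not_quasi_injective :
    (∀ φ : HForm Empty Empty, φ.inFragment {Feature.bind} → φ.free = ∅ →
       (HSatS strM (0 : ℕ) φ ↔ HSatS strN (0 : ℕ) φ)) ∧
    ¬ ∃ B : strM.W → strN.W → Prop,
        IsBisim strM strN B ∧ QuasiInjective strM strN B ∧ B (0 : ℕ) (0 : ℕ) := by
  refine ⟨isBisim_strM_strN_true.fElemEquiv_bind strM_isAcyclic strN_isAcyclic trivial, ?_⟩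
  rintro ⟨B, hB, hQ, h0⟩
  have h02 : strM.R (0 : ℕ) (2 : ℕ) := strM_rel_iff.2 (by simp)
  have h12 : ReflTransGen strM.R (1 : ℕ) (2 : ℕ) := .single (strM_rel_succ 1)
  have heq : (1 : ℕ) = 2 :=
    hQ.eq_of_rel_of_rel hB h0 (strN_subsingleton_successors _) (strM_rel_succ 0) h02 h12
  exact absurd heq (by decide)
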